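/- The coefficients a_{n,k} defined by p_n(x) = Σ_k a_{n,k} x^{n-2k}, where p_n(x) = Σ_T x^{bor(T)} over left-aligned rook placements T on 2δ_n, are exactly the γ-vector of the (n+1)-st Eulerian polynomial: S_{n+1}(x) = Σ_{k≥0} γ_{n,k} x^k (x+1)^{n-2k} with γ_{n,k} = a_{n,k}; in particular all γ_{n,k} are nonnegative. -/

import Mathlib

/-- Rook placements on the double staircase `2δ_n`: one rook per row (row `i`,
numbered from the top starting at `0`, has `2*(i+1)` cells), at most one rook
per column. -/
def RookPlacement (n : ℕ) :=
  {r : Fin n → Fin (2 * n) //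
    Function.Injective r ∧ ∀ i : Fin n, (r i : ℕ) < 2 * (i.val + 1)}

/-- Column `c` (0-indexed) of the rook placement `R` contains a rook. -/
def Occupied {n : ℕ} (R : RookPlacement n) (c : ℕ) : Prop :=
  ∃ j : Fin n, (R.1 j : ℕ) = c

/-- The number of rooks in block `i` of `R` (block `i` consists of the two
columns `2i` and `2i+1`, 0-indexed). -/
def blockRooks {n : ℕ} (R : RookPlacement n) (i : Fin n) : ℕ :=
  (Finset.univ.filter (fun j : Fin n => (R.1 j : ℕ) / 2 = i.val)).card

/-- `R` is left-aligned: no block has a rook in its right column without a rook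
in its left column. -/
def LeftAligned {n : ℕ} (R : RookPlacement n) : Prop :=
  ∀ i : Fin n, Occupied R (2 * i.val + 1) → Occupied R (2 * i.val)

/-- `R` is right-aligned: no block has a rook in its left column without a rook
in its right column. -/
def RightAligned {n : ℕ} (R : RookPlacement n) : Prop :=
  ∀ i : Fin n, Occupied R (2 * i.val) → Occupied R (2 * i.val + 1)

/-- `bor R` is the number of blocks of `R` containing exactly one rook. -/
def bor {n : ℕ} (R : RookPlacement n) : ℕ :=
  (Finset.univ.filter (fun i : Fin n => blockRooks R i = 1)).card

/-- The one-line word of a permutation of `{1, …, m}` extended by the boundary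
convention `σ_0 = σ_{m+1} = ⋯ = 0`: `permWord σ i = σ_i` for `1 ≤ i ≤ m`
(values in `{1, …, m}`) and `0` otherwise. -/
def permWord {m : ℕ} (σ : Equiv.Perm (Fin m)) : ℕ → ℕ := fun i =>
  if h : 1 ≤ i ∧ i ≤ m then (σ ⟨i - 1, by omega⟩).val + 1 else 0

/-- The number of descents of `σ ∈ S_{m}`: positions `1 ≤ i ≤ m - 1` with
`σ_i > σ_{i+1}`. -/
def desCount {m : ℕ} (σ : Equiv.Perm (Fin m)) : ℕ :=
  ((Finset.Icc 1 (m - 1)).filter (fun i => permWord σ (i + 1) < permWord σ i)).card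

/-- The number of ascents of `σ ∈ S_{m}`: positions `1 ≤ i ≤ m - 1` with
`σ_i < σ_{i+1}`. -/
def ascCount {m : ℕ} (σ : Equiv.Perm (Fin m)) : ℕ :=
  ((Finset.Icc 1 (m - 1)).filter (fun i => permWord σ i < permWord σ (i + 1))).card

/-- `σ ∈ S_m` has no double falls: no position `1 ≤ i ≤ m` with
`σ_{i-1} > σ_i > σ_{i+1}` (with the convention `σ_0 = σ_{m+1} = 0`).
Equivalently, every descent of `σ` is a peak. -/
def NoDoubleFall {m : ℕ} (σ : Equiv.Perm (Fin m)) : Prop :=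
  ∀ i ∈ Finset.Icc 1 m,
    ¬ (permWord σ i < permWord σ (i - 1) ∧ permWord σ (i + 1) < permWord σ i)

/-- `σ ∈ S_m` has no double rises: no position `1 ≤ i ≤ m` with
`σ_{i-1} < σ_i < σ_{i+1}` (with the convention `σ_0 = σ_{m+1} = 0`).
Equivalently, every ascent of `σ` is a valley. -/
def NoDoubleRise {m : ℕ} (σ : Equiv.Perm (Fin m)) : Prop :=
  ∀ i ∈ Finset.Icc 1 m,
    ¬ (permWord σ (i - 1) < permWord σ i ∧ permWord σ i < permWord σ (i + 1))

open Polynomial in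
/-- The operator carrying the `m`-th Eulerian polynomial to the next one. -/
noncomputable def eulerianStep (m : ℕ) : ℤ[X] →ₗ[ℤ] ℤ[X] :=
  LinearMap.mulLeft ℤ (1 + (m : ℤ[X]) * X) +
    LinearMap.mulLeft ℤ (X * (1 - X)) ∘ₗ derivative

open Polynomial in
lemma eulerianStep_apply (m : ℕ) (P : ℤ[X]) :
    eulerianStep m P = (1 + (m : ℤ[X]) * X) * P + X * (1 - X) * derivative P := rfl

open Polynomial in
lemma eulerianStep_X_pow (m d : ℕ) :
    eulerianStep m (X ^ d) =
      ((d : ℤ[X]) + 1) * X ^ d + ((m : ℤ[X]) - (d : ℤ[X])) * X ^ (d + 1) := by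
  rw [eulerianStep_apply]
  cases d with
  | zero => simp
  | succ d => simp; ring

open Polynomial in
lemma eulerianStep_gamma (k j : ℕ) :
    eulerianStep (2 * k + j + 1) (X ^ k * (X + 1) ^ j) =
      ((k : ℤ[X]) + 1) * (X ^ k * (X + 1) ^ (j + 1)) +
        2 * (j : ℤ[X]) * (X ^ (k + 1) * (X + 1) ^ (j - 1)) := by
  rw [eulerianStep_apply]
  cases k <;> cases j <;> simp [derivative_pow] <;> ring

/-! ### Permutations -/

/-- Insert a new largest value at position `p` of the permutation `σ`. -/
def insertMax {m : ℕ} (p : Fin (m + 1)) (σ : Equiv.Perm (Fin m)) :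
    Equiv.Perm (Fin (m + 1)) :=
  (finSuccEquiv' p).trans ((Equiv.optionCongr σ).trans (finSuccEquiv' (Fin.last m)).symm)

lemma insertMax_self {m : ℕ} (p : Fin (m + 1)) (σ : Equiv.Perm (Fin m)) :
    insertMax p σ p = Fin.last m := by
  simp [insertMax]

lemma insertMax_succAbove {m : ℕ} (p : Fin (m + 1)) (σ : Equiv.Perm (Fin m)) (i : Fin m) :
    insertMax p σ (p.succAbove i) = (σ i).castSucc := by
  simp [insertMax]

lemma insertMax_bijective (m : ℕ) :
    Function.Bijective (fun q : Fin (m + 1) × Equiv.Perm (Fin m) => insertMax q.1 q.2) := by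
  rw [Fintype.bijective_iff_injective_and_card]
  constructor
  · rintro ⟨p, σ⟩ ⟨q, τ⟩ h
    simp only at h
    have hpq : p = q := by
      apply (insertMax p σ).injective
      rw [insertMax_self, h, insertMax_self]
    subst hpq
    congr 1
    ext i
    have := insertMax_succAbove p σ i
    rw [h, insertMax_succAbove] at this
    simpa using (congrArg Fin.val this).symm
  · simp [Fintype.card_perm, Nat.factorial_succ]

lemma permWord_le {m : ℕ} (σ : Equiv.Perm (Fin m)) (i : ℕ) : permWord σ i ≤ m := by
  unfold permWord
  split_ifs <;> omega

lemma permWord_insertMax {m : ℕ} (p : Fin (m + 1)) (σ : Equiv.Perm (Fin m)) (j : ℕ) :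
    permWord (insertMax p σ) j =
      if j ≤ p then permWord σ j else if j = p + 1 then m + 1 else permWord σ (j - 1) := by
  have hp := p.isLt
  by_cases hj : 1 ≤ j ∧ j ≤ m + 1
  · rcases lt_trichotomy j (p + 1) with h | h | h
    · have hm : 1 ≤ j ∧ j ≤ m := by omega
      have e : (⟨j - 1, by omega⟩ : Fin (m + 1)) = p.succAbove ⟨j - 1, by omega⟩ := by
        rw [Fin.succAbove_of_castSucc_lt _ _ (by rw [Fin.lt_def]; simp; omega)]
        rfl
      rw [if_pos (by omega)]
      simp only [permWord, hj, hm, and_self, dite_true, e, insertMax_succAbove,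
        Fin.val_castSucc]
    · have e : (⟨j - 1, by omega⟩ : Fin (m + 1)) = p := by ext; simp; omega
      rw [if_neg (by omega), if_pos h]
      simp only [permWord, hj, and_self, dite_true, e, insertMax_self, Fin.val_last]
    · have hm : 1 ≤ j - 1 ∧ j - 1 ≤ m := by omega
      have e : (⟨j - 1, by omega⟩ : Fin (m + 1)) = p.succAbove ⟨j - 1 - 1, by omega⟩ := by
        rw [Fin.succAbove_of_le_castSucc _ _ (by rw [Fin.le_def]; simp; omega)]
        ext; simp; omega
      rw [if_neg (by omega), if_neg (by omega)]
      simp only [permWord, hj, hm, and_self, dite_true, e, insertMax_succAbove,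
        Fin.val_castSucc]
  · by_cases h0 : j = 0
    · subst h0; simp [permWord]
    · rw [if_neg (by omega), if_neg (by omega)]
      simp only [permWord]
      rw [dif_neg hj, dif_neg (by omega)]

/-- The descent set of `σ`. -/
def descents {m : ℕ} (σ : Equiv.Perm (Fin m)) : Finset ℕ :=
  (Finset.Icc 1 (m - 1)).filter (fun i => permWord σ (i + 1) < permWord σ i)

lemma mem_descents {m : ℕ} {σ : Equiv.Perm (Fin m)} {i : ℕ} :
    i ∈ descents σ ↔ 1 ≤ i ∧ i + 1 ≤ m ∧ permWord σ (i + 1) < permWord σ i := by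
  simp only [descents, Finset.mem_filter, Finset.mem_Icc]
  omega

lemma desCount_eq_card_descents {m : ℕ} (σ : Equiv.Perm (Fin m)) :
    desCount σ = (descents σ).card := rfl

lemma descents_subset_range {m : ℕ} (σ : Equiv.Perm (Fin m)) :
    descents σ ⊆ Finset.range m := by
  intro i hi
  rw [mem_descents] at hi
  simp; omega

lemma descents_insertMax {m : ℕ} {p : Fin (m + 1)} (hp : (p : ℕ) < m)
    (σ : Equiv.Perm (Fin m)) :
    descents (insertMax p σ) =
      (insert (p : ℕ) (descents σ)).image (fun i => if i < (p : ℕ) then i else i + 1) := by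
  have hle := permWord_le σ
  ext j
  simp only [mem_descents, Finset.mem_image, Finset.mem_insert, permWord_insertMax]
  constructor
  · rintro ⟨h1, h2, h3⟩
    rcases lt_trichotomy j (p + 1) with h | h | h
    · rcases lt_or_eq_of_le (Nat.lt_succ_iff.mp h) with h' | h'
      · refine ⟨j, Or.inr ⟨h1, by omega, ?_⟩, by simp [h']⟩
        rw [if_pos (by omega), if_pos (by omega)] at h3
        exact h3
      · rw [if_neg (by omega), if_pos (by omega), if_pos (by omega)] at h3
        have := hle j
        omega
    · exact ⟨p, Or.inl rfl, by simp [h]⟩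
    · obtain ⟨i, rfl⟩ : ∃ i, j = i + 1 := ⟨j - 1, by omega⟩
      refine ⟨i, Or.inr ⟨by omega, by omega, ?_⟩, by rw [if_neg (by omega)]⟩
      rw [if_neg (by omega), if_neg (by omega), if_neg (by omega), if_neg (by omega)] at h3
      simpa using h3
  · rintro ⟨i, rfl | ⟨h1, h2, h3⟩, rfl⟩
    · have := hle (p + 1)
      simp; omega
    · rcases lt_trichotomy i p with h | h | h
      · rw [if_pos h]
        refine ⟨h1, by omega, ?_⟩
        rwa [if_pos (by omega), if_pos (by omega)]
      · have := hle (p + 1)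
        subst h
        simp; omega
      · rw [if_neg (by omega)]
        refine ⟨by omega, by omega, ?_⟩
        rw [if_neg (by omega), if_neg (by omega), if_neg (by omega), if_neg (by omega)]
        simpa using h3

lemma descents_insertMax_last {m : ℕ} (σ : Equiv.Perm (Fin m)) :
    descents (insertMax (Fin.last m) σ) = descents σ := by
  have hle := permWord_le σ
  ext j
  simp only [mem_descents, permWord_insertMax, Fin.val_last]
  constructor
  · rintro ⟨h1, h2, h3⟩
    have := hle j
    split_ifs at h3 <;> omega
  · rintro ⟨h1, h2, h3⟩
    refine ⟨h1, by omega, ?_⟩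
    rwa [if_pos (by omega), if_pos (by omega)]

lemma desCount_insertMax {m : ℕ} {p : Fin (m + 1)} (hp : (p : ℕ) < m)
    (σ : Equiv.Perm (Fin m)) :
    desCount (insertMax p σ) =
      if (p : ℕ) ∈ descents σ then desCount σ else desCount σ + 1 := by
  rw [desCount_eq_card_descents, desCount_eq_card_descents, descents_insertMax hp,
    Finset.card_image_of_injective]
  · split_ifs with h
    · rw [Finset.insert_eq_of_mem h]
    · rw [Finset.card_insert_of_notMem h]
  · intro a b h
    simp only at h
    split_ifs at h <;> omega

open Polynomial in
lemma sum_X_pow_desCount_succ (m : ℕ) :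
    (∑ τ : Equiv.Perm (Fin (m + 1)), (X : ℤ[X]) ^ desCount τ) =
      eulerianStep m (∑ σ : Equiv.Perm (Fin m), (X : ℤ[X]) ^ desCount σ) := by
  rw [← (insertMax_bijective m).sum_comp (fun τ => (X : ℤ[X]) ^ desCount τ),
    Fintype.sum_prod_type_right, map_sum]
  refine Finset.sum_congr rfl fun σ _ => ?_
  rw [eulerianStep_X_pow, Fin.sum_univ_castSucc]
  have h1 : ∀ i : Fin m, (X : ℤ[X]) ^ desCount (insertMax i.castSucc σ) =
      if (i : ℕ) ∈ descents σ then X ^ desCount σ else X ^ (desCount σ + 1) := by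
    intro i
    rw [desCount_insertMax (by simp)]
    simp only [Fin.val_castSucc]
    split_ifs <;> rfl
  simp only [h1]
  rw [Fin.sum_univ_eq_sum_range
    (fun i => if i ∈ descents σ then (X : ℤ[X]) ^ desCount σ else X ^ (desCount σ + 1)),
    desCount_eq_card_descents (insertMax _ _), descents_insertMax_last,
    ← desCount_eq_card_descents, Finset.sum_ite, Finset.sum_const, Finset.sum_const,
    Finset.filter_mem_eq_inter, Finset.inter_eq_right.mpr (descents_subset_range σ),
    ← Finset.sdiff_eq_filter, Finset.card_sdiff_of_subset (descents_subset_range σ),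
    ← desCount_eq_card_descents, Finset.card_range]
  have hd : desCount σ ≤ m := by
    simpa [desCount_eq_card_descents] using Finset.card_le_card (descents_subset_range σ)
  simp only [nsmul_eq_mul, Nat.cast_sub hd]
  ring

/-! ### Left-aligned placements -/

/-- Left-aligned rook placements on `2δ_n`, as functions sending a row to the column of
its rook. -/
def IsLeftAligned (n : ℕ) (r : Fin n → ℕ) : Prop :=
  Function.Injective r ∧ (∀ i, r i < 2 * (i.val + 1)) ∧
    ∀ b, (∃ j, r j = 2 * b + 1) → ∃ j, r j = 2 * b

open Classical in
/-- The finite set of left-aligned rook placements on `2δ_n`. -/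
noncomputable def leftAlignedFinset (n : ℕ) : Finset (Fin n → ℕ) :=
  (Fintype.piFinset (fun i : Fin n => Finset.range (2 * (i.val + 1)))).filter
    (IsLeftAligned n)

lemma mem_leftAlignedFinset {n : ℕ} {r : Fin n → ℕ} :
    r ∈ leftAlignedFinset n ↔ IsLeftAligned n r := by
  simp only [leftAlignedFinset, Finset.mem_filter, Fintype.mem_piFinset, Finset.mem_range,
    and_iff_right_iff_imp]
  exact fun h => h.2.1

/-- The number of rooks in right columns. -/
def oddCount {n : ℕ} (r : Fin n → ℕ) : ℕ := ∑ j, r j % 2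

/-- The blocks with a rook in the left column. -/
def leftBlocks {n : ℕ} (r : Fin n → ℕ) : Finset ℕ :=
  (Finset.univ.filter (fun j => r j % 2 = 0)).image (fun j => r j / 2)

/-- The blocks with a rook in the right column. -/
def rightBlocks {n : ℕ} (r : Fin n → ℕ) : Finset ℕ :=
  (Finset.univ.filter (fun j => r j % 2 = 1)).image (fun j => r j / 2)

lemma mem_leftBlocks {n : ℕ} {r : Fin n → ℕ} {b : ℕ} :
    b ∈ leftBlocks r ↔ ∃ j, r j = 2 * b := by
  simp only [leftBlocks, Finset.mem_image, Finset.mem_filter, Finset.mem_univ, true_and]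
  exact exists_congr fun j => by omega

lemma mem_rightBlocks {n : ℕ} {r : Fin n → ℕ} {b : ℕ} :
    b ∈ rightBlocks r ↔ ∃ j, r j = 2 * b + 1 := by
  simp only [rightBlocks, Finset.mem_image, Finset.mem_filter, Finset.mem_univ, true_and]
  exact exists_congr fun j => by omega

namespace IsLeftAligned

variable {n : ℕ} {r : Fin n → ℕ}

lemma card_rightBlocks (h : IsLeftAligned n r) : (rightBlocks r).card = oddCount r := by
  rw [rightBlocks, Finset.card_image_of_injOn, Finset.card_filter, oddCount]
  · exact Finset.sum_congr rfl fun j _ => by split_ifs <;> omega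
  · intro a ha b hb hab
    simp at ha hb hab
    exact h.1 (by omega)

lemma card_leftBlocks_add (h : IsLeftAligned n r) :
    (leftBlocks r).card + oddCount r = n := by
  rw [leftBlocks, Finset.card_image_of_injOn, Finset.card_filter, oddCount,
    ← Finset.sum_add_distrib]
  · rw [Finset.sum_congr rfl (g := fun _ => 1) fun j _ => by split_ifs <;> omega]
    simp
  · intro a ha b hb hab
    simp at ha hb hab
    exact h.1 (by omega)

lemma rightBlocks_subset (h : IsLeftAligned n r) : rightBlocks r ⊆ leftBlocks r := by
  intro b
  rw [mem_leftBlocks, mem_rightBlocks]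
  exact h.2.2 b

lemma leftBlocks_subset (h : IsLeftAligned n r) : leftBlocks r ⊆ Finset.range n := by
  intro b
  rw [mem_leftBlocks, Finset.mem_range]
  rintro ⟨j, hj⟩
  have := h.2.1 j
  omega

lemma two_mul_oddCount_le (h : IsLeftAligned n r) : 2 * oddCount r ≤ n := by
  have := Finset.card_le_card h.rightBlocks_subset
  have := h.card_rightBlocks
  have := h.card_leftBlocks_add
  omega

lemma card_single (h : IsLeftAligned n r) :
    (leftBlocks r \ rightBlocks r).card = n - 2 * oddCount r := by
  rw [Finset.card_sdiff_of_subset h.rightBlocks_subset, h.card_rightBlocks]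
  have := h.card_leftBlocks_add
  omega

end IsLeftAligned

/-- Add a row with a rook in column `c`, pushing a rook already there one step right. -/
def insertRook {n : ℕ} (r : Fin n → ℕ) (c : ℕ) : Fin (n + 1) → ℕ :=
  Fin.snoc (α := fun _ => ℕ) (fun i => if r i = c then c + 1 else r i) c

/-- Remove the last row, pushing the rook to the right of the removed one back to the left
column of its block. -/
def removeRook {n : ℕ} (r : Fin (n + 1) → ℕ) : Fin n → ℕ := fun i =>
  if r i.castSucc = r (Fin.last n) + 1 ∧ r (Fin.last n) % 2 = 0 then r (Fin.last n)
  else r i.castSucc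

open Classical in
/-- The columns in which a rook can be inserted in a new last row. -/
noncomputable def insertColumns {n : ℕ} (r : Fin n → ℕ) : Finset ℕ :=
  (Finset.range (2 * (n + 1))).filter fun c =>
    c / 2 ∉ rightBlocks r ∧ (c % 2 = 1 → c / 2 ∈ leftBlocks r)

@[simp]
lemma insertRook_last {n : ℕ} (r : Fin n → ℕ) (c : ℕ) :
    insertRook r c (Fin.last n) = c := by
  simp [insertRook]

@[simp]
lemma insertRook_castSucc {n : ℕ} (r : Fin n → ℕ) (c : ℕ) (i : Fin n) :
    insertRook r c i.castSucc = if r i = c then c + 1 else r i := by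
  simp [insertRook]

lemma mem_insertColumns {n : ℕ} {r : Fin n → ℕ} {c : ℕ} :
    c ∈ insertColumns r ↔ c < 2 * (n + 1) ∧ c / 2 ∉ rightBlocks r ∧
      (c % 2 = 1 → c / 2 ∈ leftBlocks r) := by
  simp [insertColumns]

lemma IsLeftAligned.insertRook {n : ℕ} {r : Fin n → ℕ} (h : IsLeftAligned n r) {c : ℕ}
    (hc : c ∈ insertColumns r) : IsLeftAligned (n + 1) (insertRook r c) := by
  rw [mem_insertColumns, mem_leftBlocks, mem_rightBlocks] at hc
  obtain ⟨hc1, hc2, hc3⟩ := hc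
  have hodd : ∀ i, r i ≠ 2 * (c / 2) + 1 := fun i hi => hc2 ⟨i, hi⟩
  obtain ⟨h1, h2, h3⟩ := h
  refine ⟨?_, ?_, ?_⟩
  · intro a b
    induction a using Fin.lastCases with
    | last =>
      induction b using Fin.lastCases with
      | last => simp
      | cast b =>
        have := hodd b
        simp only [insertRook_last, insertRook_castSucc]
        split_ifs <;> omega
    | cast a =>
      induction b using Fin.lastCases with
      | last =>
        have := hodd a
        simp only [insertRook_last, insertRook_castSucc]
        split_ifs <;> omega
      | cast b =>
        have := hodd a
        have := hodd b
        simp only [insertRook_castSucc]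
        intro hab
        have : r a = r b := by split_ifs at hab <;> omega
        rw [h1 this]
  · intro i
    induction i using Fin.lastCases with
    | last => simpa using hc1
    | cast i =>
      have := hodd i
      have := h2 i
      simp only [insertRook_castSucc, Fin.val_castSucc]
      split_ifs <;> omega
  · rintro b ⟨j, hj⟩
    by_cases hb : b = c / 2
    · by_cases hc' : c % 2 = 0
      · exact ⟨Fin.last n, by simp; omega⟩
      · obtain ⟨i, hi⟩ := hc3 (by omega)
        refine ⟨i.castSucc, ?_⟩
        rw [insertRook_castSucc, if_neg (by omega), hi, hb]
    · have : ∃ j, r j = 2 * b + 1 := by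
        induction j using Fin.lastCases with
        | last => simp at hj; omega
        | cast j =>
          have := hodd j
          rw [insertRook_castSucc] at hj
          exact ⟨j, by split_ifs at hj <;> omega⟩
      obtain ⟨i, hi⟩ := h3 b this
      refine ⟨i.castSucc, ?_⟩
      rw [insertRook_castSucc, if_neg (by omega), hi]

lemma IsLeftAligned.removeRook {n : ℕ} {r : Fin (n + 1) → ℕ}
    (h : IsLeftAligned (n + 1) r) : IsLeftAligned n (removeRook r) := by
  obtain ⟨h1, h2, h3⟩ := h
  have hne : ∀ i : Fin n, r i.castSucc ≠ r (Fin.last n) := fun i hi =>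
    (Fin.castSucc_lt_last i).ne (h1 hi)
  refine ⟨?_, ?_, ?_⟩
  · intro a b hab
    have := hne a
    have := hne b
    have : r a.castSucc = r b.castSucc := by
      simp only [_root_.removeRook] at hab
      split_ifs at hab <;> omega
    exact Fin.castSucc_injective _ (h1 this)
  · intro i
    have := h2 i.castSucc
    simp only [_root_.removeRook, Fin.val_castSucc] at *
    split_ifs <;> omega
  · rintro b ⟨j, hj⟩
    have hj' : r j.castSucc = 2 * b + 1 ∧ r (Fin.last n) ≠ 2 * b := by
      simp only [_root_.removeRook] at hj
      split_ifs at hj <;> omega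
    obtain ⟨i, hi⟩ := h3 b ⟨_, hj'.1⟩
    induction i using Fin.lastCases with
    | last => exact absurd hi hj'.2
    | cast i =>
      refine ⟨i, ?_⟩
      simp only [_root_.removeRook]
      rw [if_neg (by omega), hi]

lemma last_mem_insertColumns {n : ℕ} {r : Fin (n + 1) → ℕ} (h : IsLeftAligned (n + 1) r) :
    r (Fin.last n) ∈ insertColumns (removeRook r) := by
  obtain ⟨h1, h2, h3⟩ := h
  have hne : ∀ i : Fin n, r i.castSucc ≠ r (Fin.last n) := fun i hi =>
    (Fin.castSucc_lt_last i).ne (h1 hi)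
  rw [mem_insertColumns, mem_leftBlocks, mem_rightBlocks]
  refine ⟨by simpa using h2 (Fin.last n), ?_, ?_⟩
  · rintro ⟨i, hi⟩
    have := hne i
    simp only [removeRook] at hi
    split_ifs at hi <;> omega
  · intro hodd
    obtain ⟨i, hi⟩ := h3 (r (Fin.last n) / 2) ⟨Fin.last n, by omega⟩
    induction i using Fin.lastCases with
    | last => omega
    | cast i =>
      refine ⟨i, ?_⟩
      simp only [removeRook]
      rw [if_neg (by omega), hi]

lemma insertRook_removeRook {n : ℕ} {r : Fin (n + 1) → ℕ} (h : IsLeftAligned (n + 1) r) :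
    insertRook (removeRook r) (r (Fin.last n)) = r := by
  funext i
  induction i using Fin.lastCases with
  | last => simp
  | cast i =>
    have hne : r i.castSucc ≠ r (Fin.last n) := fun hi =>
      (Fin.castSucc_lt_last i).ne (h.1 hi)
    simp only [insertRook_castSucc, removeRook]
    split_ifs <;> omega

lemma removeRook_insertRook {n : ℕ} {r : Fin n → ℕ} {c : ℕ}
    (hc : c ∈ insertColumns r) : removeRook (insertRook r c) = r := by
  rw [mem_insertColumns, mem_leftBlocks, mem_rightBlocks] at hc
  funext i
  have : r i ≠ 2 * (c / 2) + 1 := fun hi => hc.2.1 ⟨i, hi⟩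
  simp only [removeRook, insertRook_castSucc, insertRook_last]
  split_ifs <;> omega

lemma oddCount_insertRook {n : ℕ} {r : Fin n → ℕ} {c : ℕ} (h : IsLeftAligned n r)
    (hc : c ∈ insertColumns r) :
    oddCount (insertRook r c) =
      if c / 2 ∈ leftBlocks r then oddCount r + 1 else oddCount r := by
  rw [mem_insertColumns, mem_rightBlocks] at hc
  rw [oddCount, Fin.sum_univ_castSucc]
  simp only [insertRook_castSucc, insertRook_last]
  rcases Nat.mod_two_eq_zero_or_one c with h0 | h1
  · have e : ∀ i, (if r i = c then c + 1 else r i) % 2 =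
        r i % 2 + if r i = c then 1 else 0 := fun i => by split_ifs <;> omega
    simp only [e, Finset.sum_add_distrib, h0, add_zero, mem_leftBlocks, ← oddCount.eq_1]
    split_ifs with hl
    · obtain ⟨i, hi⟩ := hl
      rw [Finset.sum_eq_single i, if_pos (by omega)]
      · intro j _ hj
        rw [if_neg]
        intro hjc
        exact hj (h.1 (by omega))
      · simp
    · rw [Finset.sum_eq_zero, add_zero]
      intro i _
      rw [if_neg]
      intro hi
      exact hl ⟨i, by omega⟩
  · rw [if_pos (hc.2.2 h1), h1]
    congr 1
    refine Finset.sum_congr rfl fun i _ => ?_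
    rw [if_neg]
    intro hi
    exact hc.2.1 ⟨i, by omega⟩

lemma sum_range_two_mul {M : Type*} [AddCommMonoid M] (f : ℕ → M) (n : ℕ) :
    ∑ c ∈ Finset.range (2 * n), f c =
      ∑ b ∈ Finset.range n, (f (2 * b) + f (2 * b + 1)) := by
  induction n with
  | zero => simp
  | succ n ih =>
    rw [Finset.sum_range_succ, ← ih, Nat.mul_succ, Finset.sum_range_succ,
      Finset.sum_range_succ, add_assoc]

open Polynomial in
lemma sum_insertColumns {n : ℕ} {r : Fin n → ℕ} (h : IsLeftAligned n r) (f : ℕ → ℤ[X]) :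
    ∑ c ∈ insertColumns r, f (oddCount (insertRook r c)) =
      ((oddCount r : ℤ[X]) + 1) * f (oddCount r) +
        2 * ((n - 2 * oddCount r : ℕ) : ℤ[X]) * f (oddCount r + 1) := by
  classical
  rw [Finset.sum_congr rfl fun c hc => by rw [oddCount_insertRook h hc]]
  rw [insertColumns, Finset.sum_filter, sum_range_two_mul]
  have e : ∀ b ∈ Finset.range (n + 1),
      ((if 2 * b / 2 ∉ rightBlocks r ∧ (2 * b % 2 = 1 → 2 * b / 2 ∈ leftBlocks r) then
          f (if 2 * b / 2 ∈ leftBlocks r then oddCount r + 1 else oddCount r) else 0) +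
        if (2 * b + 1) / 2 ∉ rightBlocks r ∧
            ((2 * b + 1) % 2 = 1 → (2 * b + 1) / 2 ∈ leftBlocks r) then
          f (if (2 * b + 1) / 2 ∈ leftBlocks r then oddCount r + 1 else oddCount r) else 0) =
      (if b ∉ leftBlocks r then f (oddCount r) else 0) +
      (if b ∈ leftBlocks r \ rightBlocks r then 2 * f (oddCount r + 1) else 0) := by
    intro b _
    have d0 : 2 * b / 2 = b := by omega
    have d1 : (2 * b + 1) / 2 = b := by omega
    have m0 : 2 * b % 2 = 0 := by omega
    have m1 : (2 * b + 1) % 2 = 1 := by omega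
    simp only [d0, d1, m0, m1, Finset.mem_sdiff]
    have : b ∈ rightBlocks r → b ∈ leftBlocks r := fun hb => h.rightBlocks_subset hb
    by_cases hl : b ∈ leftBlocks r <;> by_cases hr : b ∈ rightBlocks r <;>
      simp_all [two_mul]
  rw [Finset.sum_congr rfl e, Finset.sum_add_distrib, ← Finset.sum_filter,
    ← Finset.sum_filter, Finset.sum_const, Finset.sum_const, ← Finset.sdiff_eq_filter,
    Finset.filter_mem_eq_inter]
  have hsub : leftBlocks r ⊆ Finset.range (n + 1) :=
    h.leftBlocks_subset.trans (Finset.range_subset_range.mpr n.le_succ)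
  rw [Finset.inter_eq_right.mpr (Finset.sdiff_subset.trans hsub),
    Finset.card_sdiff_of_subset hsub, h.card_single, Finset.card_range]
  have : n + 1 - (leftBlocks r).card = oddCount r + 1 := by
    have := h.card_leftBlocks_add
    omega
  rw [this]
  simp only [nsmul_eq_mul]
  push_cast
  ring

open Polynomial in
lemma sum_leftAlignedFinset_succ (n : ℕ) (f : ℕ → ℤ[X]) :
    ∑ r ∈ leftAlignedFinset (n + 1), f (oddCount r) =
      ∑ r ∈ leftAlignedFinset n, (((oddCount r : ℤ[X]) + 1) * f (oddCount r) +
        2 * ((n - 2 * oddCount r : ℕ) : ℤ[X]) * f (oddCount r + 1)) := by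
  rw [Finset.sum_congr rfl fun r hr => (sum_insertColumns (mem_leftAlignedFinset.mp hr) f).symm,
    Finset.sum_sigma']
  refine Finset.sum_bij' (fun r _ => ⟨removeRook r, r (Fin.last n)⟩)
    (fun q _ => insertRook q.1 q.2) ?_ ?_ ?_ ?_ ?_
  · intro r hr
    rw [mem_leftAlignedFinset] at hr
    exact Finset.mem_sigma.mpr
      ⟨mem_leftAlignedFinset.mpr hr.removeRook, last_mem_insertColumns hr⟩
  · rintro ⟨r, c⟩ hq
    obtain ⟨hr, hc⟩ := Finset.mem_sigma.mp hq
    exact mem_leftAlignedFinset.mpr ((mem_leftAlignedFinset.mp hr).insertRook hc)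
  · intro r hr
    exact insertRook_removeRook (mem_leftAlignedFinset.mp hr)
  · rintro ⟨r, c⟩ hq
    obtain ⟨hr, hc⟩ := Finset.mem_sigma.mp hq
    simp only [insertRook_last, removeRook_insertRook hc]
  · intro r hr
    rw [insertRook_removeRook (mem_leftAlignedFinset.mp hr)]

open Polynomial in
theorem sum_X_pow_desCount_eq_sum_leftAligned (n : ℕ) :
    (∑ σ : Equiv.Perm (Fin (n + 1)), (X : ℤ[X]) ^ desCount σ) =
      ∑ r ∈ leftAlignedFinset n, X ^ oddCount r * (X + 1) ^ (n - 2 * oddCount r) := by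
  induction n with
  | zero =>
    have hd : ∀ σ : Equiv.Perm (Fin (0 + 1)), desCount σ = 0 := fun σ => by simp [desCount]
    have h1 : leftAlignedFinset 0 = {Fin.elim0} := by
      ext r
      simp only [mem_leftAlignedFinset, Finset.mem_singleton, Subsingleton.elim r Fin.elim0,
        iff_true]
      exact ⟨fun i => i.elim0, fun i => i.elim0, fun b ⟨j, _⟩ => j.elim0⟩
    simp [hd, h1, oddCount]
  | succ n ih =>
    rw [sum_X_pow_desCount_succ, ih, map_sum,
      sum_leftAlignedFinset_succ n (fun k => X ^ k * (X + 1) ^ (n + 1 - 2 * k))]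
    refine Finset.sum_congr rfl fun r hr => ?_
    have hle := (mem_leftAlignedFinset.mp hr).two_mul_oddCount_le
    obtain ⟨j, hj⟩ := Nat.exists_eq_add_of_le hle
    generalize oddCount r = k at *
    subst hj
    have e1 : 2 * k + j - 2 * k = j := by omega
    have e2 : 2 * k + j + 1 - 2 * k = j + 1 := by omega
    have e3 : 2 * k + j + 1 - 2 * (k + 1) = j - 1 := by omega
    rw [e1, e2, e3, eulerianStep_gamma]

open Polynomial in
/-- The polynomials `X ^ k * (X + 1) ^ e k` are linearly independent. -/
lemma eq_zero_of_sum_X_pow_mul_eq_zero (N : ℕ) (e : ℕ → ℕ) (c : ℕ → ℤ)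
    (h : ∑ k ∈ Finset.range N, C (c k) * X ^ k * (X + 1) ^ e k = 0) :
    ∀ k < N, c k = 0 := by
  intro k
  induction k using Nat.strong_induction_on with
  | _ k ih =>
    intro hk
    have hcoeff := congrArg (fun P : ℤ[X] => P.coeff k) h
    simp only [finsetSum_coeff, coeff_zero] at hcoeff
    rw [Finset.sum_eq_single k] at hcoeff
    · rw [mul_assoc, coeff_C_mul, coeff_X_pow_mul'] at hcoeff
      simpa [coeff_zero_eq_eval_zero] using hcoeff
    · intro j hj hjk
      rcases lt_or_gt_of_ne hjk with hlt | hgt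
      · rw [ih j hlt (by omega)]
        simp
      · rw [mul_assoc, coeff_C_mul, coeff_X_pow_mul', if_neg (by omega), mul_zero]
    · simp [hk]

lemma leftAligned_iff {n : ℕ} (R : RookPlacement n) :
    LeftAligned R ↔ IsLeftAligned n (fun i => (R.1 i : ℕ)) := by
  constructor
  · intro h
    refine ⟨fun a b hab => R.2.1 (Fin.ext hab), R.2.2, ?_⟩
    rintro b ⟨j, hj⟩
    have := R.2.2 j
    have hj' : (R.1 j : ℕ) = 2 * b + 1 := hj
    exact h ⟨b, by omega⟩ ⟨j, hj⟩
  · intro h i hi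
    exact h.2.2 i hi

lemma blockRooks_eq_one_iff {n : ℕ} {R : RookPlacement n} (hR : LeftAligned R) (i : Fin n) :
    blockRooks R i = 1 ↔
      i.val ∈ leftBlocks (fun j => (R.1 j : ℕ)) \ rightBlocks (fun j => (R.1 j : ℕ)) := by
  rw [blockRooks, Finset.card_eq_one, Finset.mem_sdiff, mem_leftBlocks, mem_rightBlocks]
  have h := (leftAligned_iff R).mp hR
  constructor
  · rintro ⟨a, ha⟩
    have hiff : ∀ j, (R.1 j : ℕ) / 2 = i.val ↔ j = a := fun j => by
      simpa using Finset.ext_iff.mp ha j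
    have hno : ¬ ∃ j, (R.1 j : ℕ) = 2 * i.val + 1 := by
      rintro ⟨j, hj⟩
      obtain ⟨l, hl⟩ : ∃ l, (R.1 l : ℕ) = 2 * i.val := h.2.2 _ ⟨j, hj⟩
      have h1 := (hiff j).mp (by omega)
      have h2 := (hiff l).mp (by omega)
      rw [h1] at hj
      rw [h2] at hl
      omega
    refine ⟨⟨a, ?_⟩, hno⟩
    have h1 := (hiff a).mpr rfl
    have h2 : (R.1 a : ℕ) ≠ 2 * i.val + 1 := fun h' => hno ⟨a, h'⟩
    show (R.1 a : ℕ) = 2 * i.val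
    omega
  · rintro ⟨⟨a, ha⟩, hno⟩
    replace ha : (R.1 a : ℕ) = 2 * i.val := ha
    refine ⟨a, ?_⟩
    ext j
    simp only [Finset.mem_filter, Finset.mem_univ, true_and, Finset.mem_singleton]
    have h2 : (R.1 j : ℕ) ≠ 2 * i.val + 1 := fun h' => hno ⟨j, h'⟩
    constructor
    · intro hj
      exact h.1 (show (R.1 j : ℕ) = R.1 a by omega)
    · rintro rfl
      omega

lemma bor_eq {n : ℕ} {R : RookPlacement n} (hR : LeftAligned R) :
    bor R = n - 2 * oddCount (fun j => (R.1 j : ℕ)) := by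
  have h := (leftAligned_iff R).mp hR
  rw [← h.card_single, bor, ← Finset.card_map Fin.valEmbedding]
  congr 1
  ext b
  simp only [Finset.mem_map, Finset.mem_filter, Finset.mem_univ, true_and,
    blockRooks_eq_one_iff hR, Fin.valEmbedding_apply]
  constructor
  · rintro ⟨i, hi, rfl⟩
    exact hi
  · intro hb
    have := Finset.mem_range.mp (h.leftBlocks_subset (Finset.mem_sdiff.mp hb).1)
    exact ⟨⟨b, this⟩, hb, rfl⟩

lemma natCard_leftAligned (n k : ℕ) (hk : k ≤ n / 2) :
    Nat.card {R : RookPlacement n // LeftAligned R ∧ bor R = n - 2 * k} =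
      ((leftAlignedFinset n).filter (fun r => oddCount r = k)).card := by
  have key : ∀ R : RookPlacement n, (LeftAligned R ∧ bor R = n - 2 * k) ↔
      (fun i => (R.1 i : ℕ)) ∈ (leftAlignedFinset n).filter (fun r => oddCount r = k) := by
    intro R
    rw [Finset.mem_filter, mem_leftAlignedFinset, ← leftAligned_iff]
    refine and_congr_right fun hR => ?_
    have := ((leftAligned_iff R).mp hR).two_mul_oddCount_le
    rw [bor_eq hR]
    omega
  rw [← Fintype.card_coe, ← Nat.card_eq_fintype_card]
  refine Nat.card_congr
    { toFun := fun R => ⟨fun i => (R.1.1 i : ℕ), (key R.1).mp R.2⟩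
      invFun := fun r =>
        have h := mem_leftAlignedFinset.mp (Finset.mem_filter.mp r.2).1
        ⟨⟨fun i => ⟨r.1 i, (h.2.1 i).trans_le (by omega)⟩,
          fun a b hab => h.1 (congrArg Fin.val hab), h.2.1⟩, (key _).mpr r.2⟩
      left_inv := fun R => rfl
      right_inv := fun r => rfl }

open Polynomial in
/-- The coefficients `a_{n,k}` of `p_n(x) = Σ_k a_{n,k} x^{n-2k}` (where
`a_{n,k}` is the number of left-aligned rook placements on `2δ_n` with exactly
`n - 2k` blocks containing one rook) form the γ-vector of the `(n+1)`-st
Eulerian polynomial: if `S_{n+1}(x) = Σ_{k ≤ n/2} γ_k x^k (x+1)^{n-2k}`, then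
necessarily `γ_k = a_{n,k}` for all `k ≤ n/2`; in particular all `γ_k` are
nonnegative. -/
theorem gamma_vector_eq_left_aligned_counts (n : ℕ) (γ : ℕ → ℤ)
    (hγ : (∑ σ : Equiv.Perm (Fin (n + 1)), (X : Polynomial ℤ) ^ desCount σ) =
      ∑ k ∈ Finset.range (n / 2 + 1),
        Polynomial.C (γ k) * X ^ k * (X + 1) ^ (n - 2 * k)) :
    ∀ k ≤ n / 2,
      γ k = (Nat.card {R : RookPlacement n // LeftAligned R ∧ bor R = n - 2 * k} : ℤ) ∧
      0 ≤ γ k := by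
  intro k hk
  have hsum : ∑ r ∈ leftAlignedFinset n, (X : ℤ[X]) ^ oddCount r *
      (X + 1) ^ (n - 2 * oddCount r) = ∑ k ∈ Finset.range (n / 2 + 1),
        C (((leftAlignedFinset n).filter (fun r => oddCount r = k)).card : ℤ) * X ^ k *
          (X + 1) ^ (n - 2 * k) := by
    rw [← Finset.sum_fiberwise_of_maps_to (t := Finset.range (n / 2 + 1)) (g := oddCount)]
    · refine Finset.sum_congr rfl fun k _ => ?_
      rw [Finset.sum_congr rfl (g := fun _ => (X : ℤ[X]) ^ k * (X + 1) ^ (n - 2 * k))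
        fun r hr => by rw [(Finset.mem_filter.mp hr).2]]
      simp [mul_assoc]
    · intro r hr
      have := (mem_leftAlignedFinset.mp hr).two_mul_oddCount_le
      rw [Finset.mem_range]
      omega
  rw [sum_X_pow_desCount_eq_sum_leftAligned, hsum, eq_comm, ← sub_eq_zero,
    ← Finset.sum_sub_distrib] at hγ
  have h0 := eq_zero_of_sum_X_pow_mul_eq_zero (n / 2 + 1) (fun k => n - 2 * k)
    (fun k => γ k - (((leftAlignedFinset n).filter (fun r => oddCount r = k)).card : ℤ))
    (by simpa only [C_sub, sub_mul] using hγ) k (by omega)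
  rw [natCard_leftAligned n k hk]
  omega
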